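/- Let Λ₃ = ℤ[t₁^{±1}, t₂^{±1}, t₃^{±1}] be the ring of Laurent polynomials in three variables with integer coefficients, let M = Λ₃³ be the free Λ₃-module with basis a₁, a₂, a₃, and let φ : M → Λ₃ be the Λ₃-linear map with φ(aᵢ) = tᵢ − 1 for i = 1, 2, 3. With the operation x ▷ y = (φ(y) + 1)·x − φ(x)·y, one has a₁ ▷ (a₂ ▷ a₃) ≠ (a₁ ▷ a₂) ▷ (a₁ ▷ a₃); in particular, the operation ▷ is not left self-distributive on M. -/

import Mathlib

/-- `Λ₃ = ℤ[t₁^{±1}, t₂^{±1}, t₃^{±1}]`, the ring of Laurent polynomials in three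
variables with integer coefficients, realized as the additive monoid algebra of `ℤ`
over the group `Fin 3 →₀ ℤ`. -/
abbrev Lambda3 : Type := AddMonoidAlgebra ℤ (Fin 3 →₀ ℤ)

/-- The variable `tᵢ` of `Λ₃`, the monomial corresponding to the `i`-th standard generator. -/
noncomputable def tvar (i : Fin 3) : Lambda3 :=
  AddMonoidAlgebra.single (Finsupp.single i 1) 1

/-- The operation `x ▷ y = (φ(y) + 1) • x - φ(x) • y` on an `R`-module `M`. -/
def tri {R M : Type*} [CommRing R] [AddCommGroup M] [Module R M]
    (φ : M →ₗ[R] R) (x y : M) : M :=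
  (φ y + 1) • x - φ x • y

theorem smul_add_smul_add_smul_eq_zero_iff {R M : Type*} [Ring R] [AddCommGroup M] [Module R M]
    {x y z : M} (hxyz : LinearIndependent R ![x, y, z]) {a b c : R} :
    a • x + b • y + c • z = 0 ↔ a = 0 ∧ b = 0 ∧ c = 0 := by
  refine ⟨fun hsum => ?_, by rintro ⟨rfl, rfl, rfl⟩; simp⟩
  have hcoeff := Fintype.linearIndependent_iff.mp hxyz ![a, b, c]
    (by simpa [Fin.sum_univ_three] using hsum)
  exact ⟨hcoeff 0, hcoeff 1, hcoeff 2⟩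

theorem linearIndependent_pi_single_fin_three (R : Type*) [Semiring R] :
    LinearIndependent R ![(Pi.single 0 1 : Fin 3 → R), Pi.single 1 1, Pi.single 2 1] := by
  convert Pi.linearIndependent_single_one (Fin 3) R with i
  fin_cases i <;> rfl

section Tri

variable {R M : Type*} [CommRing R] [AddCommGroup M] [Module R M]

theorem map_tri (φ : M →ₗ[R] R) (x y : M) : φ (tri φ x y) = φ x := by
  simp only [tri, map_sub, map_smul, smul_eq_mul]
  ring

theorem tri_tri_sub_tri_tri (φ : M →ₗ[R] R) (x y z : M) :
    tri φ x (tri φ y z) - tri φ (tri φ x y) (tri φ x z) =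
      (φ x * (φ z - φ y)) • x + (φ x * (φ x - φ z)) • y + (φ x * (φ y - φ x)) • z := by
  have hleft : tri φ x (tri φ y z) = (φ y + 1) • x - φ x • tri φ y z := by
    rw [tri, map_tri]
  have hright : tri φ (tri φ x y) (tri φ x z) =
      (φ x + 1) • tri φ x y - φ x • tri φ x z := by
    rw [tri, map_tri, map_tri]
  rw [hleft, hright]
  simp only [tri]
  module

theorem tri_not_left_distrib_general [NoZeroDivisors R] (φ : M →ₗ[R] R) {x y z : M}
    (hxyz : LinearIndependent R ![x, y, z]) :
    tri φ x (tri φ y z) ≠ tri φ (tri φ x y) (tri φ x z) ↔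
      φ x ≠ 0 ∧ ¬(φ x = φ y ∧ φ y = φ z) := by
  rw [← sub_ne_zero, tri_tri_sub_tri_tri, Ne, smul_add_smul_add_smul_eq_zero_iff hxyz]
  simp only [mul_eq_zero, sub_eq_zero]
  grind

end Tri

theorem tvar_injective : Function.Injective tvar :=
  (AddMonoidAlgebra.single_left_injective one_ne_zero).comp
    (Finsupp.single_left_injective one_ne_zero)

theorem tvar_ne_one (i : Fin 3) : tvar i ≠ 1 := by
  rw [tvar, AddMonoidAlgebra.one_def, Ne, AddMonoidAlgebra.single_left_inj one_ne_zero,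
    Finsupp.single_eq_zero]
  exact one_ne_zero

/-- In the free module `Λ₃³` with basis `a₁, a₂, a₃` and `φ` the `Λ₃`-linear map with
`φ(aᵢ) = tᵢ - 1`, the operation `x ▷ y = (φ(y) + 1) • x - φ(x) • y` satisfies
`a₁ ▷ (a₂ ▷ a₃) ≠ (a₁ ▷ a₂) ▷ (a₁ ▷ a₃)`; in particular `▷` is not left
self-distributive. -/
theorem tri_not_left_distrib
    (φ : (Fin 3 → Lambda3) →ₗ[Lambda3] Lambda3)
    (a₁ a₂ a₃ : Fin 3 → Lambda3)
    (ha₁ : a₁ = Pi.single 0 1) (ha₂ : a₂ = Pi.single 1 1) (ha₃ : a₃ = Pi.single 2 1)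
    (h₁ : φ a₁ = tvar 0 - 1) (h₂ : φ a₂ = tvar 1 - 1) (h₃ : φ a₃ = tvar 2 - 1) :
    tri φ a₁ (tri φ a₂ a₃) ≠ tri φ (tri φ a₁ a₂) (tri φ a₁ a₃) := by
  subst ha₁ ha₂ ha₃
  exact (tri_not_left_distrib_general φ (linearIndependent_pi_single_fin_three Lambda3)).mpr
    ⟨by simpa only [h₁, sub_ne_zero] using tvar_ne_one 0, by simp [h₁, h₂, tvar_injective.eq_iff]⟩
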